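/- Let p be a real number with 0 ≤ p ≤ 1/4, and consider the probability space of infinite sequences (b_j)_{j≥1} of independent Bernoulli(p) bits. There exist an absolute constant C > 0 and, for each integer n ≥ 1, a deterministic adaptive strategy σ whose actions are of two kinds — inclusion queries Y ⊆ {1,…,n} and membership tests W ⊆ {1,…,n} — such that for every integer k ≥ 1 and every nonempty family F of subsets of {1,…,n} in which every member has at most k elements, the following holds. If the j-th inclusion query Y made by σ is answered YES exactly when (there exists W ∈ F with W ⊆ Y) and b_j = 0 (so false negatives occur independently with probability at most p and there are no false positives), and every membership test W is answered truthfully by the truth value of W ∈ F, then σ almost surely halts with output a member of F, and the expected total number of actions (inclusion queries plus membership tests) is at most C·k·log₂(2n). (Theorem 2 / Lemma 3: Las Vegas extraction with O(k log n) expected queries to a randomized inclusion oracle.) -/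

import Mathlib

open MeasureTheory

/-- An action of a deterministic adaptive strategy with two kinds of queries
over the universe `{1,…,n}` (modelled as `Fin n`): an inclusion query on a
subset `Y`, a membership test on a subset `W`, or halting with output `W`. -/
inductive RWEAction (n : ℕ) where
  | incl (Y : Finset (Fin n))
  | memTest (W : Finset (Fin n))
  | halt (W : Finset (Fin n))

/-- The state after `i` steps of running the strategy `σ` for the witness
family `F` with random bit sequence `ω`: the first component is the
transcript of Boolean answers received, the second is the number of inclusion
queries made so far. The `j`-th inclusion query `Y` (counting from `j = 0`)
is answered YES exactly when some `W ∈ F` satisfies `W ⊆ Y` and the Bernoulli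
bit `ω j` is `false` (so `ω j = true` produces a false negative, and false
positives never occur); a membership test `W` is answered truthfully by
whether `W ∈ F`. Once `σ` halts the state no longer changes. -/
def RWErun {n : ℕ} (σ : List Bool → RWEAction n) (F : Finset (Finset (Fin n)))
    (ω : ℕ → Bool) : ℕ → List Bool × ℕ
  | 0 => ([], 0)
  | i + 1 =>
    match σ (RWErun σ F ω i).1 with
    | RWEAction.incl Y =>
        ((RWErun σ F ω i).1 ++
          [decide (∃ W ∈ F, W ⊆ Y) && !(ω (RWErun σ F ω i).2)],
         (RWErun σ F ω i).2 + 1)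
    | RWEAction.memTest W => ((RWErun σ F ω i).1 ++ [decide (W ∈ F)], (RWErun σ F ω i).2)
    | RWEAction.halt _ => RWErun σ F ω i

/-!
The strategy keeps a candidate `Y` that contains a witness, starting with the whole universe. It
sweeps through the blocks of a dyadic partition and removes a block from `Y` whenever the oracle
confirms that a witness survives; since there are no false positives, `Y` keeps containing a
witness. After each sweep it tests whether `Y` itself is a witness and, if not, halves the blocks
and sweeps again; once the blocks are singletons, it repeats sweeps with singletons until a test
succeeds.

The expected cost is bounded by a potential function that drops by at least one in expectation with
every action. A pending block has potential `2`, enough for its query. At most `k` blocks at a time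
are essential, meaning that no witness survives their removal; every other block that is tested is
removed with probability at least `3 / 4`, which pays for the halves of the blocks that survive by
mistake. An element of `Y` is redundant if `Y` contains a witness without it. A redundant element
survives a sweep with singletons with probability at most `1 / 4`, so its weight may be quadrupled
in each such sweep. Starting from total weight `O(k)`, after `O(log n)` sweeps a single redundant
element weighs enough to pay for a whole further sweep, and a test only fails if some element is
redundant.
-/

namespace WitnessExtraction

section Runs

variable {n : ℕ} {σ : List Bool → RWEAction n} {F : Finset (Finset (Fin n))} {ω : ℕ → Bool}
  {m q : ℕ} {h : List Bool}

theorem run_succ_of_incl {Y : Finset (Fin n)} (hrun : RWErun σ F ω m = (h, q))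
    (hσ : σ h = .incl Y) :
    RWErun σ F ω (m + 1) = (h ++ [decide (∃ W ∈ F, W ⊆ Y) && !ω q], q + 1) := by
  simp only [RWErun, hrun, hσ]

theorem run_succ_of_memTest {W : Finset (Fin n)} (hrun : RWErun σ F ω m = (h, q))
    (hσ : σ h = .memTest W) : RWErun σ F ω (m + 1) = (h ++ [decide (W ∈ F)], q) := by
  simp only [RWErun, hrun, hσ]

theorem run_succ_of_halt {W : Finset (Fin n)} (hrun : RWErun σ F ω m = (h, q))
    (hσ : σ h = .halt W) : RWErun σ F ω (m + 1) = (h, q) := by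
  simp only [RWErun, hrun, hσ]

variable (σ F)

theorem run_snd_le (ω : ℕ → Bool) (m : ℕ) : (RWErun σ F ω m).2 ≤ m := by
  induction m with
  | zero => rfl
  | succ m ih =>
    cases hσ : σ (RWErun σ F ω m).1 with
    | incl Y => simpa only [run_succ_of_incl rfl hσ] using Nat.succ_le_succ ih
    | memTest W => simpa only [run_succ_of_memTest rfl hσ] using ih.trans m.le_succ
    | halt W => simpa only [run_succ_of_halt rfl hσ] using ih.trans m.le_succ

theorem run_eq_of_mem_cylinder {ω ω' : ℕ → Bool} {m : ℕ} (hω : ω' ∈ PiNat.cylinder ω m) :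
    RWErun σ F ω' m = RWErun σ F ω m := by
  induction m with
  | zero => rfl
  | succ m ih =>
    have hbit : ω' (RWErun σ F ω m).2 = ω (RWErun σ F ω m).2 :=
      hω _ (Nat.lt_succ_of_le (run_snd_le σ F ω m))
    simp only [RWErun, ih (PiNat.cylinder_anti ω m.le_succ hω), hbit]

/-- The event that `σ` has not halted after `m` actions, so that it performs action number `m`
(counting from `0`). -/
def runningAt (m : ℕ) : Set (ℕ → Bool) :=
  {ω | ¬ ∃ W, σ (RWErun σ F ω m).1 = .halt W}

theorem isOpen_runningAt (m : ℕ) : IsOpen (runningAt σ F m) := by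
  refine isOpen_iff_forall_mem_open.2 fun ω hω =>
    ⟨PiNat.cylinder ω m, fun ω' hω' => ?_, PiNat.isOpen_cylinder _ ω m, PiNat.self_mem_cylinder ω m⟩
  rwa [runningAt, Set.mem_ofPred_eq, run_eq_of_mem_cylinder σ F hω']

/-- The number of actions performed before `σ` halts, and `∞` if it never does. -/
noncomputable def haltingTime (ω : ℕ → Bool) : ENNReal :=
  ⨅ (m : ℕ) (_ : ∃ W, σ (RWErun σ F ω m).1 = .halt W), (m : ENNReal)

theorem haltingTime_le_tsum_indicator_runningAt (ω : ℕ → Bool) :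
    haltingTime σ F ω ≤ ∑' m, (runningAt σ F m).indicator 1 ω := by
  classical
  by_cases hhalt : ∃ m W, σ (RWErun σ F ω m).1 = .halt W
  · have hrunning : ∀ m ∈ Finset.range (Nat.find hhalt),
        (runningAt σ F m).indicator (1 : (ℕ → Bool) → ENNReal) ω = 1 := fun m hm =>
      Set.indicator_of_mem (Nat.find_min hhalt (Finset.mem_range.1 hm)) _
    calc haltingTime σ F ω ≤ (Nat.find hhalt : ENNReal) :=
          iInf₂_le (Nat.find hhalt) (Nat.find_spec hhalt)
      _ = ∑ m ∈ Finset.range (Nat.find hhalt), (runningAt σ F m).indicator 1 ω := by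
        simp [Finset.sum_congr rfl hrunning]
      _ ≤ ∑' m, (runningAt σ F m).indicator 1 ω := ENNReal.sum_le_tsum _
  · have hrunning : ∀ m, (runningAt σ F m).indicator (1 : (ℕ → Bool) → ENNReal) ω = 1 := fun m =>
      Set.indicator_of_mem (s := runningAt σ F m) (fun hm => hhalt ⟨m, hm⟩) _
    simp [hrunning]

theorem lintegral_haltingTime_le_tsum (μ : Measure (ℕ → Bool)) :
    ∫⁻ ω, haltingTime σ F ω ∂μ ≤ ∑' m, μ (runningAt σ F m) := by
  have hmeas (m : ℕ) : MeasurableSet (runningAt σ F m) := (isOpen_runningAt σ F m).measurableSet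
  calc ∫⁻ ω, haltingTime σ F ω ∂μ ≤ ∫⁻ ω, ∑' m, (runningAt σ F m).indicator 1 ω ∂μ :=
        lintegral_mono (haltingTime_le_tsum_indicator_runningAt σ F)
    _ = ∑' m, ∫⁻ ω, (runningAt σ F m).indicator 1 ω ∂μ :=
        lintegral_tsum fun m => (measurable_one.indicator (hmeas m)).aemeasurable
    _ = ∑' m, μ (runningAt σ F m) := by simp only [lintegral_indicator_one (hmeas _)]

end Runs

section Noise

theorem cylinder_update_succ {E : ℕ → Type*} (v : ∀ j, E j) (q : ℕ) (b : E q) :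
    PiNat.cylinder (Function.update v q b) (q + 1) = PiNat.cylinder v q ∩ {ω | ω q = b} := by
  ext ω
  simp only [PiNat.mem_cylinder_iff, Set.mem_inter_iff, Set.mem_ofPred_eq, Order.lt_add_one_iff]
  constructor
  · exact fun hω => ⟨fun j hj => by simpa [hj.ne] using hω j hj.le, by simpa using hω q le_rfl⟩
  · rintro ⟨hlt, hq⟩ j hj
    obtain hj | rfl := hj.lt_or_eq
    · simpa [hj.ne] using hlt j hj
    · simpa using hq

theorem run_succ_of_mem_cylinder_update {n : ℕ} {σ : List Bool → RWEAction n}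
    {F : Finset (Finset (Fin n))} {Y : Finset (Fin n)} {m q : ℕ} {v : ℕ → Bool} {h : List Bool}
    (hrun : ∀ ω ∈ PiNat.cylinder v q, RWErun σ F ω m = (h, q)) (hσ : σ h = .incl Y) (b : Bool) :
    ∀ ω ∈ PiNat.cylinder (Function.update v q b) (q + 1),
      RWErun σ F ω (m + 1) = (h ++ [decide (∃ W ∈ F, W ⊆ Y) && !b], q + 1) := by
  intro ω hω
  rw [cylinder_update_succ] at hω
  rw [run_succ_of_incl (hrun ω hω.1) hσ, hω.2.out]

theorem measureReal_cylinder_inter_eq_add (μ : Measure (ℕ → Bool)) [IsFiniteMeasure μ]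
    (v : ℕ → Bool) (q : ℕ) (A : Set (ℕ → Bool)) :
    μ.real (PiNat.cylinder v q ∩ A) =
      μ.real (PiNat.cylinder (Function.update v q true) (q + 1) ∩ A) +
        μ.real (PiNat.cylinder (Function.update v q false) (q + 1) ∩ A) := by
  have hbit : MeasurableSet {ω : ℕ → Bool | ω q = true} :=
    measurableSet_eq_fun (measurable_pi_apply q) measurable_const
  rw [cylinder_update_succ, cylinder_update_succ, Set.inter_right_comm, Set.inter_right_comm _ _ A,
    ← measureReal_inter_add_sdiff hbit]
  congr 3
  ext ω
  simp

/-- Whatever the preceding bits are, the conditional probability that the next bit is `true`, that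
is, causes a false negative, is at most `r`. -/
def FalseNegativeRateLE (μ : Measure (ℕ → Bool)) (r : ℝ) : Prop :=
  ∀ v q, μ.real (PiNat.cylinder (Function.update v q true) (q + 1)) ≤
    r * μ.real (PiNat.cylinder v q)

theorem falseNegativeRateLE_of_bernoulli {μ : Measure (ℕ → Bool)} {p r : ℝ} (hp : 0 ≤ p)
    (hpr : p ≤ r)
    (hμ : ∀ (s : Finset ℕ) (v : ℕ → Bool), μ {ω | ∀ j ∈ s, ω j = v j} =
      ∏ j ∈ s, ENNReal.ofReal (if v j then p else 1 - p)) :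
    FalseNegativeRateLE μ r := by
  intro v q
  have hcylinder (v : ℕ → Bool) (q : ℕ) : μ (PiNat.cylinder v q) =
      ∏ j ∈ Finset.range q, ENNReal.ofReal (if v j then p else 1 - p) := by
    rw [← hμ]
    simp [PiNat.cylinder]
  have hprefix : ∏ j ∈ Finset.range q,
      ENNReal.ofReal (if Function.update v q true j then p else 1 - p) =
        μ (PiNat.cylinder v q) := by
    rw [hcylinder]
    refine Finset.prod_congr rfl fun j hj => ?_
    rw [Function.update_of_ne (Finset.mem_range.1 hj).ne]
  calc μ.real (PiNat.cylinder (Function.update v q true) (q + 1))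
      = p * μ.real (PiNat.cylinder v q) := by
        rw [measureReal_def, hcylinder, Finset.prod_range_succ, hprefix, Function.update_self,
          if_pos rfl, ENNReal.toReal_mul, ENNReal.toReal_ofReal hp, mul_comm, measureReal_def]
    _ ≤ r * μ.real (PiNat.cylinder v q) := by gcongr

end Noise

section Potential

variable {n : ℕ} {σ : List Bool → RWEAction n} {F : Finset (Finset (Fin n))}
  {Inv : List Bool → Prop} {Φ : List Bool → ℝ} {r : ℝ}

/-- A potential function `Φ` for `σ` on transcripts satisfying the invariant `Inv`: every action
lowers it by at least one in expectation, as long as false negatives have probability at most `r`.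
The expected potential after an inclusion query is affine in that probability, so it suffices to
bound it for probability `0` (`incl_truthful`) and for probability `r` (`incl_noisy`). -/
structure IsPotential (σ : List Bool → RWEAction n) (F : Finset (Finset (Fin n)))
    (Inv : List Bool → Prop) (Φ : List Bool → ℝ) (r : ℝ) : Prop where
  inv_nil : Inv []
  inv_memTest : ∀ h W, Inv h → σ h = .memTest W → Inv (h ++ [decide (W ∈ F)])
  inv_incl : ∀ h Y, Inv h → σ h = .incl Y →
    Inv (h ++ [false]) ∧ Inv (h ++ [decide (∃ W ∈ F, W ⊆ Y)])
  mem_of_halt : ∀ h W, Inv h → σ h = .halt W → W ∈ F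
  nonneg : ∀ h, Inv h → 0 ≤ Φ h
  memTest : ∀ h W, Inv h → σ h = .memTest W → Φ (h ++ [decide (W ∈ F)]) + 1 ≤ Φ h
  incl_truthful : ∀ h Y, Inv h → σ h = .incl Y → Φ (h ++ [decide (∃ W ∈ F, W ⊆ Y)]) + 1 ≤ Φ h
  incl_noisy : ∀ h Y, Inv h → σ h = .incl Y →
    r * Φ (h ++ [false]) + (1 - r) * Φ (h ++ [decide (∃ W ∈ F, W ⊆ Y)]) + 1 ≤ Φ h

theorem IsPotential.inv_run (hΦ : IsPotential σ F Inv Φ r) (ω : ℕ → Bool) (m : ℕ) :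
    Inv (RWErun σ F ω m).1 := by
  induction m with
  | zero => exact hΦ.inv_nil
  | succ m ih =>
    cases hσ : σ (RWErun σ F ω m).1 with
    | incl Y =>
      rw [run_succ_of_incl rfl hσ]
      cases ω (RWErun σ F ω m).2
      · simpa using (hΦ.inv_incl _ Y ih hσ).2
      · simpa using (hΦ.inv_incl _ Y ih hσ).1
    | memTest W => rw [run_succ_of_memTest rfl hσ]; exact hΦ.inv_memTest _ W ih hσ
    | halt W => rw [run_succ_of_halt rfl hσ]; exact ih

theorem weighted_drift_le {a b x y z r : ℝ} (ha : 0 ≤ a) (hb : 0 ≤ b) (har : a ≤ r * (a + b))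
    (htruthful : y + 1 ≤ z) (hnoisy : r * x + (1 - r) * y + 1 ≤ z) :
    (a + b) + (a * x + b * y) ≤ (a + b) * z := by
  obtain hxy | hyx := le_total x y
  · calc (a + b) + (a * x + b * y) ≤ (a + b) + (a * y + b * y) := by gcongr
      _ = (a + b) * (y + 1) := by ring
      _ ≤ (a + b) * z := by gcongr
  · calc (a + b) + (a * x + b * y) = (a + b) * (y + 1) + a * (x - y) := by ring
      _ ≤ (a + b) * (y + 1) + r * (a + b) * (x - y) := by
        gcongr
      _ = (a + b) * (r * x + (1 - r) * y + 1) := by ring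
      _ ≤ (a + b) * z := by gcongr

theorem IsPotential.sum_measureReal_cylinder_inter_runningAt_le (hΦ : IsPotential σ F Inv Φ r)
    {μ : Measure (ℕ → Bool)} [IsFiniteMeasure μ] (hμ : FalseNegativeRateLE μ r) (N : ℕ) {m q : ℕ}
    {v : ℕ → Bool} {h : List Bool} (hh : Inv h)
    (hrun : ∀ ω ∈ PiNat.cylinder v q, RWErun σ F ω m = (h, q)) :
    ∑ i ∈ Finset.range N, μ.real (PiNat.cylinder v q ∩ runningAt σ F (m + i)) ≤
      μ.real (PiNat.cylinder v q) * Φ h := by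
  induction N generalizing m q v h with
  | zero => simpa using mul_nonneg measureReal_nonneg (hΦ.nonneg h hh)
  | succ N ih =>
    have hsplit : ∑ i ∈ Finset.range (N + 1), μ.real (PiNat.cylinder v q ∩ runningAt σ F (m + i)) =
        μ.real (PiNat.cylinder v q ∩ runningAt σ F m) +
          ∑ i ∈ Finset.range N, μ.real (PiNat.cylinder v q ∩ runningAt σ F (m + 1 + i)) := by
      rw [Finset.sum_range_succ', add_comm]
      simp only [Nat.add_right_comm m 1, Nat.add_assoc m, add_zero]
    have hfirst : μ.real (PiNat.cylinder v q ∩ runningAt σ F m) ≤ μ.real (PiNat.cylinder v q) :=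
      measureReal_mono Set.inter_subset_left
    rw [hsplit]
    cases hσ : σ h with
    | incl Y =>
      have hfalse := ih (m := m + 1) (q := q + 1) (hΦ.inv_incl h Y hh hσ).1 <| by
        simpa using run_succ_of_mem_cylinder_update hrun hσ true
      have htrue := ih (m := m + 1) (q := q + 1) (hΦ.inv_incl h Y hh hσ).2 <| by
        simpa using run_succ_of_mem_cylinder_update hrun hσ false
      have htotal := measureReal_cylinder_inter_eq_add μ v q Set.univ
      simp only [Set.inter_univ] at htotal
      have hdrift := weighted_drift_le measureReal_nonneg measureReal_nonneg
        (htotal ▸ hμ v q) (hΦ.incl_truthful h Y hh hσ) (hΦ.incl_noisy h Y hh hσ)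
      simp only [measureReal_cylinder_inter_eq_add μ v q (runningAt _ _ _),
        Finset.sum_add_distrib] at hfirst ⊢
      rw [htotal] at hfirst ⊢
      linarith
    | memTest W =>
      have hrest := ih (hΦ.inv_memTest h W hh hσ) fun ω hω =>
        run_succ_of_memTest (hrun ω hω) hσ
      have hdrift := mul_le_mul_of_nonneg_left (hΦ.memTest h W hh hσ)
        (measureReal_nonneg (μ := μ) (s := PiNat.cylinder v q))
      linarith
    | halt W =>
      have hhalted : PiNat.cylinder v q ∩ runningAt σ F m = ∅ :=
        Set.eq_empty_of_forall_notMem fun ω hω => hω.2 ⟨W, by rw [hrun ω hω.1, hσ]⟩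
      rw [hhalted, measureReal_empty, zero_add]
      exact ih hh fun ω hω => run_succ_of_halt (hrun ω hω) hσ

theorem IsPotential.tsum_measure_runningAt_le (hΦ : IsPotential σ F Inv Φ r)
    {μ : Measure (ℕ → Bool)} [IsProbabilityMeasure μ] (hμ : FalseNegativeRateLE μ r) :
    ∑' m, μ (runningAt σ F m) ≤ ENNReal.ofReal (Φ []) := by
  refine ENNReal.tsum_le_of_sum_range_le fun N => ?_
  have hsum := hΦ.sum_measureReal_cylinder_inter_runningAt_le hμ N (m := 0) (q := 0)
    (v := fun _ => false) hΦ.inv_nil fun _ _ => rfl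
  simp only [PiNat.cylinder_zero, Set.univ_inter, zero_add, probReal_univ, one_mul] at hsum
  calc ∑ m ∈ Finset.range N, μ (runningAt σ F m)
      = ENNReal.ofReal (∑ m ∈ Finset.range N, μ.real (runningAt σ F m)) := by
        rw [ENNReal.ofReal_sum_of_nonneg fun _ _ => measureReal_nonneg]
        exact Finset.sum_congr rfl fun _ _ => (ofReal_measureReal).symm
    _ ≤ ENNReal.ofReal (Φ []) := ENNReal.ofReal_le_ofReal hsum

theorem IsPotential.measure_halt_mem_eq_one (hΦ : IsPotential σ F Inv Φ r)
    {μ : Measure (ℕ → Bool)} [IsProbabilityMeasure μ] (hμ : FalseNegativeRateLE μ r) :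
    μ {ω | ∃ m W, σ (RWErun σ F ω m).1 = .halt W ∧ W ∈ F} = 1 := by
  have hfinite : ∑' m, μ (runningAt σ F m) ≠ ⊤ :=
    ne_top_of_le_ne_top ENNReal.ofReal_ne_top (hΦ.tsum_measure_runningAt_le hμ)
  suffices hae : ∀ᵐ ω ∂μ, ∃ m W, σ (RWErun σ F ω m).1 = .halt W ∧ W ∈ F from
    (measure_congr (Filter.eventuallyEq_univ.2 hae)).trans measure_univ
  filter_upwards [ae_eventually_notMem hfinite] with ω hω
  obtain ⟨m, hm⟩ := hω.exists
  obtain ⟨W, hW⟩ := not_not.1 hm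
  exact ⟨m, W, hW, hΦ.mem_of_halt _ W (hΦ.inv_run ω m) hW⟩

theorem IsPotential.lintegral_haltingTime_le (hΦ : IsPotential σ F Inv Φ r)
    {μ : Measure (ℕ → Bool)} [IsProbabilityMeasure μ] (hμ : FalseNegativeRateLE μ r) :
    ∫⁻ ω, haltingTime σ F ω ∂μ ≤ ENNReal.ofReal (Φ []) :=
  (lintegral_haltingTime_le_tsum σ F μ).trans (hΦ.tsum_measure_runningAt_le hμ)

end Potential

section Sweep

open Finset

variable {α β : Type*} [DecidableEq β] (F : Finset (Finset α)) (f : α → β)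
  (Y : Finset α) (Q : Finset β)

/-- The truth value of the inclusion oracle for `F` on the query `Y`. -/
abbrev HasWitness : Prop := ∃ W ∈ F, W ⊆ Y

/-- `Y` without the block of `f`-label `c`. -/
def removeBlock (c : β) : Finset α := {x ∈ Y | f x ≠ c}

variable {F Y Q} {c : β}

theorem HasWitness.mono {Z : Finset α} (hY : HasWitness F Y) (hYZ : Y ⊆ Z) : HasWitness F Z :=
  hY.imp fun _ hW => ⟨hW.1, hW.2.trans hYZ⟩

theorem removeBlock_subset : removeBlock f Y c ⊆ Y := filter_subset _ _

theorem erase_subset_image_removeBlock (hQ : Q ⊆ Y.image f) :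
    Q.erase c ⊆ (removeBlock f Y c).image f := by
  intro d hd
  obtain ⟨hdc, hdQ⟩ := mem_erase.1 hd
  obtain ⟨x, hx, rfl⟩ := mem_image.1 (hQ hdQ)
  exact mem_image_of_mem f (mem_filter.2 ⟨hx, hdc⟩)

theorem image_removeBlock_sdiff_erase (hc : c ∈ Q) :
    (removeBlock f Y c).image f \ Q.erase c = Y.image f \ Q := by
  ext d
  simp only [removeBlock, mem_sdiff, mem_image, mem_filter, mem_erase]
  grind

theorem cast_card_image_sdiff_erase (hc : c ∈ Q) (hQ : Q ⊆ Y.image f) :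
    (#(Y.image f \ Q.erase c) : ℝ) = #(Y.image f \ Q) + 1 := by
  rw [sdiff_erase (hQ hc), card_insert_of_notMem (by simp [hc]), Nat.cast_add_one]

variable (F Y Q) [DecidableEq α]

/-- The labels of the blocks of `Y` that have already been tested in the current sweep, the labels
in `Q` being still pending, and whose removal from `Y` would destroy all witnesses. -/
def essentialBlocks : Finset β := {c ∈ Y.image f \ Q | ¬ HasWitness F (removeBlock f Y c)}

/-- The elements whose removal from `Y` leaves a witness. -/
def redundant : Finset α := {x ∈ Y | HasWitness F (Y.erase x)}

/-- The total weight of the redundant elements, where an element weighs `a` as long as its block is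
pending and `b` once its block has been tested. -/
def redundantWeight (a b : ℝ) : ℝ := ∑ x ∈ redundant F Y, if f x ∈ Q then a else b

/-- The part of the potential function that refers to the current sweep. A pending block costs `2`.
A tested block that is still in `Y` costs `4`, as it may split into two blocks for the next sweep,
but `3` of this is refunded if it is essential. -/
noncomputable def sweepPotential (a b : ℝ) : ℝ :=
  2 * #Q + 4 * #(Y.image f \ Q) - 3 * #(essentialBlocks F f Y Q) + redundantWeight F f Y Q a b

variable {F Y Q} {a b : ℝ} {k : ℕ}

theorem redundant_mono {Z : Finset α} (hYZ : Y ⊆ Z) : redundant F Y ⊆ redundant F Z := fun x hx =>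
  have hx := mem_filter.1 hx
  mem_filter.2 ⟨hYZ hx.1, hx.2.mono (erase_subset_erase x hYZ)⟩

theorem redundant_nonempty (hY : HasWitness F Y) (hYF : Y ∉ F) : (redundant F Y).Nonempty := by
  obtain ⟨W, hWF, hWY⟩ := hY
  obtain ⟨x, hxY, hxW⟩ := exists_of_ssubset (hWY.ssubset_of_ne fun h => hYF (h ▸ hWF))
  exact ⟨x, mem_filter.2 ⟨hxY, W, hWF, subset_erase.2 ⟨hWY, hxW⟩⟩⟩

theorem card_essentialBlocks_le (hk : ∀ W ∈ F, #W ≤ k) (hY : HasWitness F Y) :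
    #(essentialBlocks F f Y Q) ≤ k := by
  obtain ⟨W, hWF, hWY⟩ := hY
  have hsub : essentialBlocks F f Y Q ⊆ W.image f := by
    intro c hc
    by_contra hcW
    refine (mem_filter.1 hc).2 ⟨W, hWF, fun x hx => mem_filter.2 ⟨hWY hx, ?_⟩⟩
    exact fun hxc => hcW (hxc ▸ mem_image_of_mem f hx)
  exact (card_le_card hsub).trans (card_image_le.trans (hk W hWF))

theorem essentialBlocks_subset_removeBlock (hc : c ∈ Q) :
    essentialBlocks F f Y Q ⊆ essentialBlocks F f (removeBlock f Y c) (Q.erase c) := by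
  rw [essentialBlocks, essentialBlocks, image_removeBlock_sdiff_erase f hc]
  exact monotone_filter_right _ fun d _ hd hW =>
    hd (hW.mono (filter_subset_filter _ (removeBlock_subset f)))

theorem essentialBlocks_erase_of_hasWitness (hc : c ∈ Q) (hQ : Q ⊆ Y.image f)
    (hW : HasWitness F (removeBlock f Y c)) :
    essentialBlocks F f Y (Q.erase c) = essentialBlocks F f Y Q := by
  rw [essentialBlocks, sdiff_erase (hQ hc), filter_insert, if_neg (not_not.2 hW), essentialBlocks]

theorem card_essentialBlocks_erase_of_not_hasWitness (hc : c ∈ Q) (hQ : Q ⊆ Y.image f)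
    (hW : ¬ HasWitness F (removeBlock f Y c)) :
    #(essentialBlocks F f Y (Q.erase c)) = #(essentialBlocks F f Y Q) + 1 := by
  rw [essentialBlocks, sdiff_erase (hQ hc), filter_insert, if_pos hW,
    card_insert_of_notMem (by simp [hc]), essentialBlocks]

theorem redundantWeight_nonneg (ha : 0 ≤ a) (hb : 0 ≤ b) : 0 ≤ redundantWeight F f Y Q a b :=
  sum_nonneg fun _ _ => by split_ifs <;> assumption

theorem redundantWeight_image : redundantWeight F f Y (Y.image f) a b = #(redundant F Y) * a := by
  have hpending : ∀ x ∈ redundant F Y, (if f x ∈ Y.image f then a else b) = a := fun x hx =>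
    if_pos (mem_image_of_mem f (mem_filter.1 hx).1)
  rw [redundantWeight, sum_congr rfl hpending, sum_const, nsmul_eq_mul]

theorem redundantWeight_empty : redundantWeight F f Y ∅ a b = #(redundant F Y) * b := by
  simp [redundantWeight]

theorem redundantWeight_erase (hc : c ∈ Q) :
    redundantWeight F f Y (Q.erase c) a b =
      redundantWeight F f Y Q a b + (b - a) * #{x ∈ redundant F Y | f x = c} := by
  rw [redundantWeight, redundantWeight, natCast_card_filter, mul_sum, ← sum_add_distrib]
  refine sum_congr rfl fun x _ => ?_
  by_cases hx : f x = c <;> simp [hx, hc]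

theorem redundantWeight_removeBlock_le (ha : 0 ≤ a) (hb : 0 ≤ b) (hc : c ∈ Q) :
    redundantWeight F f (removeBlock f Y c) (Q.erase c) a b ≤
      redundantWeight F f Y Q a b - a * #{x ∈ redundant F Y | f x = c} := by
  have hsub : redundant F (removeBlock f Y c) ⊆ {x ∈ redundant F Y | f x ≠ c} := fun x hx =>
    mem_filter.2 ⟨redundant_mono (removeBlock_subset f) hx,
      (mem_filter.1 (mem_filter.1 hx).1).2⟩
  have hblock : ∑ x ∈ redundant F Y with f x = c, (if f x ∈ Q then a else b) =
      a * #{x ∈ redundant F Y | f x = c} := by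
    rw [sum_congr rfl fun x hx => if_pos ((mem_filter.1 hx).2 ▸ hc), sum_const, nsmul_eq_mul,
      mul_comm]
  calc redundantWeight F f (removeBlock f Y c) (Q.erase c) a b
      ≤ ∑ x ∈ redundant F Y with f x ≠ c, (if f x ∈ Q.erase c then a else b) :=
        sum_le_sum_of_subset_of_nonneg hsub fun _ _ _ => by split_ifs <;> assumption
    _ = ∑ x ∈ redundant F Y with f x ≠ c, (if f x ∈ Q then a else b) :=
        sum_congr rfl fun x hx => by simp [(mem_filter.1 hx).2]
    _ = redundantWeight F f Y Q a b - a * #{x ∈ redundant F Y | f x = c} := by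
        rw [← hblock, redundantWeight, eq_sub_iff_add_eq', sum_filter_add_sum_filter_not]

theorem redundant_filter_eq_empty (hf : Function.Injective f)
    (hW : ¬ HasWitness F (removeBlock f Y c)) : {x ∈ redundant F Y | f x = c} = ∅ := by
  refine filter_eq_empty_iff.2 fun x hx hxc => hW ((mem_filter.1 hx).2.mono fun y hy => ?_)
  obtain ⟨hyx, hyY⟩ := mem_erase.1 hy
  exact mem_filter.2 ⟨hyY, fun hyc => hyx (hf (hyc.trans hxc.symm))⟩

theorem sweepPotential_removeBlock_le (ha : 0 ≤ a) (hb : 0 ≤ b) (hc : c ∈ Q) :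
    sweepPotential F f (removeBlock f Y c) (Q.erase c) a b ≤
      sweepPotential F f Y Q a b - 2 - a * #{x ∈ redundant F Y | f x = c} := by
  have hessential : (#(essentialBlocks F f Y Q) : ℝ) ≤ _ :=
    Nat.cast_le.2 (card_le_card (essentialBlocks_subset_removeBlock f hc))
  have hweight := redundantWeight_removeBlock_le (F := F) (Y := Y) f ha hb hc
  rw [sweepPotential, sweepPotential, image_removeBlock_sdiff_erase f hc, cast_card_erase_of_mem hc]
  linarith

theorem sweepPotential_erase_of_hasWitness (hc : c ∈ Q) (hQ : Q ⊆ Y.image f)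
    (hW : HasWitness F (removeBlock f Y c)) :
    sweepPotential F f Y (Q.erase c) a b =
      sweepPotential F f Y Q a b + 2 + (b - a) * #{x ∈ redundant F Y | f x = c} := by
  rw [sweepPotential, sweepPotential, essentialBlocks_erase_of_hasWitness f hc hQ hW,
    redundantWeight_erase f hc, cast_card_image_sdiff_erase f hc hQ, cast_card_erase_of_mem hc]
  ring

theorem sweepPotential_erase_of_not_hasWitness (hab : a = b ∨ Function.Injective f) (hc : c ∈ Q)
    (hQ : Q ⊆ Y.image f) (hW : ¬ HasWitness F (removeBlock f Y c)) :
    sweepPotential F f Y (Q.erase c) a b = sweepPotential F f Y Q a b - 1 := by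
  have hweight : (b - a) * (#{x ∈ redundant F Y | f x = c} : ℝ) = 0 := by
    obtain rfl | hf := hab
    · rw [sub_self, zero_mul]
    · rw [redundant_filter_eq_empty f hf hW, card_empty, Nat.cast_zero, mul_zero]
  rw [sweepPotential, sweepPotential, card_essentialBlocks_erase_of_not_hasWitness f hc hQ hW,
    redundantWeight_erase f hc, hweight, cast_card_image_sdiff_erase f hc hQ,
    cast_card_erase_of_mem hc, Nat.cast_add_one]
  ring

theorem sweepPotential_expected_le (ha : 0 ≤ a) (hb : 0 ≤ b) (hba : b ≤ 4 * a) (hc : c ∈ Q)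
    (hQ : Q ⊆ Y.image f) (hW : HasWitness F (removeBlock f Y c)) :
    1 / 4 * sweepPotential F f Y (Q.erase c) a b +
        (1 - 1 / 4) * sweepPotential F f (removeBlock f Y c) (Q.erase c) a b ≤
      sweepPotential F f Y Q a b - 1 := by
  have hyes := sweepPotential_removeBlock_le (F := F) (Y := Y) f ha hb hc
  have hgrowth : b * (#{x ∈ redundant F Y | f x = c} : ℝ) ≤
      4 * a * #{x ∈ redundant F Y | f x = c} := by gcongr
  rw [sweepPotential_erase_of_hasWitness f hc hQ hW]
  linarith

theorem neg_three_mul_le_sweepPotential (ha : 0 ≤ a) (hb : 0 ≤ b) (hk : ∀ W ∈ F, #W ≤ k)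
    (hY : HasWitness F Y) : -(3 * k : ℝ) ≤ sweepPotential F f Y Q a b := by
  have hessential : (#(essentialBlocks F f Y Q) : ℝ) ≤ k :=
    Nat.cast_le.2 (card_essentialBlocks_le f hk hY)
  have hweight := redundantWeight_nonneg (F := F) (Y := Y) (Q := Q) f ha hb
  have hcards : (0 : ℝ) ≤ 2 * #Q + 4 * #(Y.image f \ Q) := by positivity
  rw [sweepPotential]
  linarith only [hessential, hweight, hcards]

theorem sweepPotential_image :
    sweepPotential F f Y (Y.image f) a b = 2 * #(Y.image f) + #(redundant F Y) * a := by
  simp [sweepPotential, essentialBlocks, redundantWeight_image]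

theorem sweepPotential_image_le_of_card_le {γ : Type*} [DecidableEq γ] {g : α → γ} {a' b' : ℝ}
    (hk : ∀ W ∈ F, #W ≤ k) (hY : HasWitness F Y) (hg : #(Y.image g) ≤ 2 * #(Y.image f)) :
    sweepPotential F g Y (Y.image g) a' b' ≤
      sweepPotential F f Y ∅ a b + 3 * k - (b - a') * #(redundant F Y) := by
  have hessential : (#(essentialBlocks F f Y ∅) : ℝ) ≤ k :=
    Nat.cast_le.2 (card_essentialBlocks_le f hk hY)
  have hg' : (#(Y.image g) : ℝ) ≤ 2 * #(Y.image f) := mod_cast hg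
  rw [sweepPotential_image, sweepPotential, redundantWeight_empty, card_empty, sdiff_empty,
    Nat.cast_zero]
  linarith

end Sweep

section Strategy

open Finset

variable {n : ℕ} {L l : ℕ}

/-- The label of the block containing `x` in sweep `l`. The blocks are dyadic intervals of length
`2 ^ (L - l)`; by truncated subtraction they are singletons from sweep `L` on. -/
def blockLabel (L l : ℕ) (x : Fin n) : ℕ := x / 2 ^ (L - l)

theorem blockLabel_injective (hl : L ≤ l) : Function.Injective (blockLabel (n := n) L l) :=
  fun x y hxy => Fin.ext <| by simpa [blockLabel, Nat.sub_eq_zero_of_le hl] using hxy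

theorem blockLabel_zero (hn : n ≤ 2 ^ L) (x : Fin n) : blockLabel L 0 x = 0 :=
  Nat.div_eq_of_lt (x.isLt.trans_le hn)

theorem blockLabel_succ_div_two (hl : l < L) (x : Fin n) :
    blockLabel L (l + 1) x / 2 = blockLabel L l x := by
  rw [blockLabel, blockLabel, Nat.div_div_eq_div_mul, ← pow_succ]
  congr 2
  lia

theorem card_image_blockLabel_succ_le (L l : ℕ) (Y : Finset (Fin n)) :
    #(Y.image (blockLabel L (l + 1))) ≤ 2 * #(Y.image (blockLabel L l)) := by
  obtain hl | hl := lt_or_ge l L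
  · refine card_le_mul_card_image_of_maps_to (f := (· / 2)) ?_ 2 fun d _ => ?_
    · simpa [blockLabel_succ_div_two hl] using fun x hx => ⟨x, hx, rfl⟩
    · refine (card_le_card (t := {2 * d, 2 * d + 1}) fun c hc => ?_).trans card_le_two
      have := (mem_filter.1 hc).2
      simp only [mem_insert, mem_singleton]
      lia
  · have hinj := blockLabel_injective (n := n) hl
    have hinj' := blockLabel_injective (n := n) (hl.trans l.le_succ)
    rw [card_image_of_injective Y hinj, card_image_of_injective Y hinj']
    lia

/-- The state of the search: `sweep l Y Q` is a sweep with blocks of level `l`, where `Y` is the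
current candidate and `Q` holds the labels of its blocks that are still to be tested; `done Y` is
the state after `Y` has been recognised as a witness. -/
inductive SearchState (n : ℕ) where
  | sweep (l : ℕ) (Y : Finset (Fin n)) (Q : Finset ℕ)
  | done (Y : Finset (Fin n))

namespace SearchState

/-- The state at the start of sweep `l` with candidate `Y`, where all blocks are pending. -/
def start (L l : ℕ) (Y : Finset (Fin n)) : SearchState n := sweep l Y (Y.image (blockLabel L l))

/-- The action of the strategy: ask whether the first pending block can be removed, or test the
candidate when no block is pending. -/
def action (L : ℕ) : SearchState n → RWEAction n
  | sweep l Y Q =>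
    if hQ : Q.Nonempty then .incl (removeBlock (blockLabel L l) Y (Q.min' hQ)) else .memTest Y
  | done Y => .halt Y

/-- The state after receiving the answer `b`: a block is removed if and only if the answer is YES,
and a failed membership test starts the next sweep. -/
def next (L : ℕ) : SearchState n → Bool → SearchState n
  | sweep l Y Q, b =>
    if hQ : Q.Nonempty then
      sweep l (if b then removeBlock (blockLabel L l) Y (Q.min' hQ) else Y) (Q.erase (Q.min' hQ))
    else if b then done Y else start L (l + 1) Y
  | done Y, _ => done Y

/-- The state after the answers in the transcript `h`. -/
def after (L : ℕ) (h : List Bool) : SearchState n := h.foldl (next L) (start L 0 univ)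

end SearchState

open SearchState

/-- The search strategy; `L` is the number of halvings after which the blocks are singletons. -/
def strategy (n L : ℕ) (h : List Bool) : RWEAction n := (after L h).action L

section Transitions

variable {s : SearchState n} {W : Finset (Fin n)}

theorem after_append_singleton (h : List Bool) (b : Bool) :
    (after L (h ++ [b]) : SearchState n) = (after L h).next L b := by
  simp [after]

theorem eq_done_of_action_eq_halt (hs : s.action L = .halt W) : s = done W := by
  cases s <;> grind [action]

theorem eq_sweep_empty_of_action_eq_memTest (hs : s.action L = .memTest W) :
    ∃ l, s = sweep l W ∅ := by
  cases s <;> grind [action, not_nonempty_iff_eq_empty]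

theorem eq_sweep_of_action_eq_incl (hs : s.action L = .incl W) :
    ∃ l Y Q, ∃ c ∈ Q, s = sweep l Y Q ∧ W = removeBlock (blockLabel L l) Y c ∧
      ∀ b, s.next L b = sweep l (if b then W else Y) (Q.erase c) := by
  cases s with
  | sweep l Y Q =>
    by_cases hQ : Q.Nonempty
    · obtain rfl : removeBlock (blockLabel L l) Y (Q.min' hQ) = W := by simpa [action, hQ] using hs
      exact ⟨l, Y, Q, Q.min' hQ, Q.min'_mem hQ, rfl, rfl, fun b => by simp [next, hQ]⟩
    · simp [action, hQ] at hs
  | done Y => simp [action] at hs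

theorem next_sweep_empty (b : Bool) :
    (sweep l W ∅).next L b = if b then done W else start L (l + 1) W := by
  simp [next]

end Transitions

section Weights

/-- The weight in sweep `l` of a redundant element whose block is pending. The initial weight
`A / 4 ^ L` is quadrupled from sweep `L` on, until it reaches `A` in sweep `2 * L`. -/
noncomputable def pendingWeight (A : ℝ) (L l : ℕ) : ℝ := A / 4 ^ (L - (l - L))

/-- The weight in sweep `l` of a redundant element whose block has been tested. -/
noncomputable def testedWeight (A : ℝ) (L l : ℕ) : ℝ :=
  if l < L then pendingWeight A L l else 4 * pendingWeight A L l

variable {A : ℝ}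

theorem pendingWeight_nonneg (hA : 0 ≤ A) : 0 ≤ pendingWeight A L l := by
  rw [pendingWeight]; positivity

theorem testedWeight_nonneg (hA : 0 ≤ A) : 0 ≤ testedWeight A L l := by
  have := pendingWeight_nonneg (L := L) (l := l) hA
  rw [testedWeight]; split_ifs <;> positivity

theorem testedWeight_le (hA : 0 ≤ A) : testedWeight A L l ≤ 4 * pendingWeight A L l := by
  have := pendingWeight_nonneg (L := L) (l := l) hA
  rw [testedWeight]; split_ifs <;> linarith

theorem pendingWeight_eq_testedWeight_or_injective (A : ℝ) (n L l : ℕ) :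
    pendingWeight A L l = testedWeight A L l ∨ Function.Injective (blockLabel (n := n) L l) := by
  obtain hl | hl := lt_or_ge l L
  · exact .inl (if_pos hl).symm
  · exact .inr (blockLabel_injective hl)

theorem pendingWeight_succ_le_testedWeight (hA : 0 ≤ A) :
    pendingWeight A L (l + 1) ≤ testedWeight A L l := by
  rw [testedWeight]
  split_ifs with hl
  · rw [pendingWeight, pendingWeight, Nat.sub_eq_zero_of_le hl, Nat.sub_eq_zero_of_le hl.le]
  · have hexp : L - (l - L) ≤ L - (l + 1 - L) + 1 := by lia
    calc pendingWeight A L (l + 1) = 4 * (A / 4 ^ (L - (l + 1 - L) + 1)) := by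
          rw [pendingWeight, pow_succ]; field
      _ ≤ 4 * pendingWeight A L l := by
          rw [pendingWeight]; gcongr; norm_num

theorem pendingWeight_of_two_mul_le (hl : 2 * L ≤ l) : pendingWeight A L l = A := by
  simp [pendingWeight, show L - (l - L) = 0 by lia]

-- Up to sweep `2 * L` a failed test is paid by the decreasing number of remaining sweeps, and
-- afterwards by the weight of a redundant element.
theorem failed_test_budget (hA : 0 ≤ A) {m : ℝ} (hm : 1 ≤ m) :
    A * ((2 * L - (l + 1) : ℕ) + 1) + A ≤
      A * ((2 * L - l : ℕ) + 1) + (testedWeight A L l - pendingWeight A L (l + 1)) * m := by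
  have hgap := sub_nonneg.2 (pendingWeight_succ_le_testedWeight (L := L) (l := l) hA)
  obtain hl | hl := lt_or_ge l (2 * L)
  · rw [show 2 * L - l = 2 * L - (l + 1) + 1 by lia, Nat.cast_add_one]
    linarith [mul_nonneg hgap (zero_le_one.trans hm)]
  · have hlast : testedWeight A L l - pendingWeight A L (l + 1) = 3 * A := by
      rw [testedWeight, if_neg (by lia), pendingWeight_of_two_mul_le hl,
        pendingWeight_of_two_mul_le (hl.trans l.le_succ)]
      ring
    rw [hlast, Nat.sub_eq_zero_of_le hl, Nat.sub_eq_zero_of_le (hl.trans l.le_succ)]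
    nlinarith

end Weights

section Drift

variable (F : Finset (Finset (Fin n))) (k L : ℕ)

/-- The invariant of the search: the candidate contains a witness. -/
def Invariant : SearchState n → Prop
  | sweep l Y Q => HasWitness F Y ∧ Q ⊆ Y.image (blockLabel L l)
  | done Y => Y ∈ F

/-- The potential of a search state when all witnesses have at most `k` elements. Each of the sweeps
up to sweep `2 * L` has a budget of `3 * k + 1`, which pays for its membership test and for the loss
of the refunds for at most `k` essential blocks. -/
noncomputable def potential : SearchState n → ℝ
  | sweep l Y Q => (3 * k + 1) * ((2 * L - l : ℕ) + 1) +
      sweepPotential F (blockLabel L l) Y Q (pendingWeight (3 * k + 1) L l)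
        (testedWeight (3 * k + 1) L l)
  | done _ => 0

variable {F k L} {s : SearchState n} {W : Finset (Fin n)}

theorem one_le_potential_sweep (hk : ∀ W ∈ F, #W ≤ k) {Y : Finset (Fin n)} {Q : Finset ℕ}
    (hY : HasWitness F Y) : 1 ≤ potential F k L (sweep l Y Q) := by
  have hA : (0 : ℝ) ≤ 3 * k + 1 := by positivity
  have hlower := neg_three_mul_le_sweepPotential (Q := Q) (blockLabel L l)
    (pendingWeight_nonneg (L := L) (l := l) hA)
    (testedWeight_nonneg (L := L) (l := l) hA) hk hY
  have hbudget : (3 * k + 1 : ℝ) * 1 ≤ (3 * k + 1) * ((2 * L - l : ℕ) + 1) := by gcongr; simp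
  rw [potential]
  linarith

theorem potential_nonneg (hk : ∀ W ∈ F, #W ≤ k) (hs : Invariant F L s) :
    0 ≤ potential F k L s := by
  cases s with
  | sweep l Y Q => exact zero_le_one.trans (one_le_potential_sweep hk hs.1)
  | done Y => exact le_rfl

theorem invariant_start {Y : Finset (Fin n)} (hY : HasWitness F Y) :
    Invariant F L (start L l Y) := ⟨hY, Subset.rfl⟩

theorem invariant_next_of_memTest (hs : Invariant F L s) (hact : s.action L = .memTest W) :
    Invariant F L (s.next L (decide (W ∈ F))) := by
  obtain ⟨l, rfl⟩ := eq_sweep_empty_of_action_eq_memTest hact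
  rw [next_sweep_empty]
  by_cases hW : W ∈ F
  · simp only [hW, decide_true, if_true]
    exact hW
  · simpa [hW] using invariant_start hs.1

theorem potential_next_of_memTest (hk : ∀ W ∈ F, #W ≤ k) (hs : Invariant F L s)
    (hact : s.action L = .memTest W) :
    potential F k L (s.next L (decide (W ∈ F))) + 1 ≤ potential F k L s := by
  obtain ⟨l, rfl⟩ := eq_sweep_empty_of_action_eq_memTest hact
  rw [next_sweep_empty]
  by_cases hW : W ∈ F
  · simpa [hW, potential] using one_le_potential_sweep hk hs.1
  · have hA : (0 : ℝ) ≤ 3 * k + 1 := by positivity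
    have hredundant : (1 : ℝ) ≤ #(redundant F W) :=
      mod_cast (redundant_nonempty hs.1 hW).card_pos
    have hbudget := failed_test_budget (L := L) (l := l) hA hredundant
    have hsweep := sweepPotential_image_le_of_card_le (blockLabel L l)
      (a := pendingWeight (3 * k + 1) L l) (b := testedWeight (3 * k + 1) L l)
      (a' := pendingWeight (3 * k + 1) L (l + 1)) (b' := testedWeight (3 * k + 1) L (l + 1))
      hk hs.1 (card_image_blockLabel_succ_le L l W)
    simp only [hW, decide_false, Bool.false_eq_true, if_false, start, potential]
    linarith

theorem invariant_next_of_incl (hs : Invariant F L s) (hact : s.action L = .incl W) :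
    Invariant F L (s.next L false) ∧ Invariant F L (s.next L (decide (HasWitness F W))) := by
  obtain ⟨l, Y, Q, c, _, rfl, rfl, hnext⟩ := eq_sweep_of_action_eq_incl hact
  have hkeep : Invariant F L (sweep l Y (Q.erase c)) := ⟨hs.1, (erase_subset c Q).trans hs.2⟩
  by_cases hW : HasWitness F (removeBlock (blockLabel L l) Y c)
  · simpa [hnext, hW, hkeep] using ⟨hW, erase_subset_image_removeBlock _ hs.2⟩
  · simpa [hnext, hW] using hkeep

theorem potential_next_of_incl (hs : Invariant F L s) (hact : s.action L = .incl W) :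
    potential F k L (s.next L (decide (HasWitness F W))) + 1 ≤ potential F k L s ∧
      1 / 4 * potential F k L (s.next L false) +
        (1 - 1 / 4) * potential F k L (s.next L (decide (HasWitness F W))) + 1 ≤
          potential F k L s := by
  obtain ⟨l, Y, Q, c, hc, rfl, rfl, hnext⟩ := eq_sweep_of_action_eq_incl hact
  have hA : (0 : ℝ) ≤ 3 * k + 1 := by positivity
  have hpending := pendingWeight_nonneg (L := L) (l := l) hA
  have htested := testedWeight_nonneg (L := L) (l := l) hA
  by_cases hW : HasWitness F (removeBlock (blockLabel L l) Y c)
  · have hyes := sweepPotential_removeBlock_le (F := F) (Y := Y) (blockLabel L l)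
      hpending htested hc
    have hexpected := sweepPotential_expected_le (blockLabel L l) hpending htested
      (testedWeight_le hA) hc hs.2 hW
    have hblock := mul_nonneg hpending
      (Nat.cast_nonneg (α := ℝ) #{x ∈ redundant F Y | blockLabel L l x = c})
    simp only [hnext, hW, decide_true, if_true, Bool.false_eq_true, if_false, potential]
    constructor <;> linarith
  · have hno := sweepPotential_erase_of_not_hasWitness (blockLabel L l)
      (pendingWeight_eq_testedWeight_or_injective (3 * k + 1) n L l) hc hs.2 hW
    simp only [hnext, hW, decide_false, Bool.false_eq_true, if_false, potential]
    constructor <;> linarith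

theorem isPotential_strategy (hF : F.Nonempty) (hk : ∀ W ∈ F, #W ≤ k) :
    IsPotential (strategy n L) F (fun h => Invariant F L (after L h))
      (fun h => potential F k L (after L h)) (1 / 4) where
  inv_nil := invariant_start <| hF.imp fun W hW => ⟨hW, subset_univ W⟩
  inv_memTest h W hs hact := by
    rw [after_append_singleton]; exact invariant_next_of_memTest hs hact
  inv_incl h Y hs hact := by
    simp only [after_append_singleton]; exact invariant_next_of_incl hs hact
  mem_of_halt h W hs hact := by rwa [eq_done_of_action_eq_halt hact] at hs
  nonneg h hs := potential_nonneg hk hs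
  memTest h W hs hact := by
    rw [after_append_singleton]; exact potential_next_of_memTest hk hs hact
  incl_truthful h Y hs hact := by
    rw [after_append_singleton]; exact (potential_next_of_incl hs hact).1
  incl_noisy h Y hs hact := by
    simp only [after_append_singleton]; exact (potential_next_of_incl hs hact).2

end Drift

theorem potential_start_le (F : Finset (Finset (Fin n))) (k : ℕ) (hn : n ≤ 2 ^ L) :
    potential F k L (start L 0 univ) ≤ (3 * k + 1) * (2 * L + 2) + 2 := by
  have hblocks : (#((univ : Finset (Fin n)).image (blockLabel L 0)) : ℝ) ≤ 1 := by
    have hsub : (univ : Finset (Fin n)).image (blockLabel L 0) ⊆ {0} := by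
      exact image_subset_iff.2 fun x _ => mem_singleton.2 (blockLabel_zero hn x)
    exact mod_cast card_le_card hsub
  have hredundant : (#(redundant F univ) : ℝ) ≤ 4 ^ L := by
    have hcard : #(redundant F univ) ≤ n := (card_le_univ _).trans_eq (Fintype.card_fin n)
    exact mod_cast hcard.trans (hn.trans (Nat.pow_le_pow_left (by norm_num) L))
  have hA : (0 : ℝ) ≤ 3 * k + 1 := by positivity
  have hweight : #(redundant F univ) * pendingWeight (3 * k + 1) L 0 ≤ 3 * k + 1 := by
    calc #(redundant F univ) * pendingWeight (3 * k + 1) L 0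
        ≤ 4 ^ L * pendingWeight (3 * k + 1) L 0 := by
          gcongr; exact pendingWeight_nonneg hA
      _ = 3 * k + 1 := by simp [pendingWeight, mul_div_cancel₀]
  rw [start, potential, sweepPotential_image, Nat.sub_zero]
  push_cast
  linarith

theorem one_le_logb_two_mul (hn : 1 ≤ n) : 1 ≤ Real.logb 2 (2 * n) := by
  rw [Real.logb_mul two_ne_zero (by positivity), Real.logb_self_eq_one one_lt_two]
  exact le_add_of_nonneg_right (Real.logb_nonneg one_lt_two (mod_cast hn))

theorem natCast_clog_two_le_logb_two_mul (hn : 1 ≤ n) :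
    (Nat.clog 2 n : ℝ) ≤ Real.logb 2 (2 * n) := by
  have hceil := Nat.ceil_lt_add_one (Real.logb_nonneg one_lt_two (Nat.one_le_cast.2 hn))
  rw [Real.logb_mul two_ne_zero (by positivity), Real.logb_self_eq_one one_lt_two, add_comm,
    ← Real.natCeil_logb_natCast]
  exact mod_cast hceil.le

theorem potential_start_clog_le {k : ℕ} (F : Finset (Finset (Fin n))) (hn : 1 ≤ n) (hk : 1 ≤ k) :
    potential F k (Nat.clog 2 n) (start (Nat.clog 2 n) 0 univ) ≤
      18 * k * Real.logb 2 (2 * n) := by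
  have hk' : (1 : ℝ) ≤ k := mod_cast hk
  have hL := natCast_clog_two_le_logb_two_mul hn
  have hlog := one_le_logb_two_mul hn
  calc potential F k (Nat.clog 2 n) (start (Nat.clog 2 n) 0 univ)
      ≤ (3 * k + 1) * (2 * Nat.clog 2 n + 2) + 2 :=
        potential_start_le F k (Nat.le_pow_clog one_lt_two n)
    _ ≤ (3 * k + k) * (2 * Real.logb 2 (2 * n) + 2 * Real.logb 2 (2 * n)) +
          2 * (k * Real.logb 2 (2 * n)) := by
        gcongr
        · linarith
        · nlinarith
    _ = 18 * k * Real.logb 2 (2 * n) := by ring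

end Strategy

end WitnessExtraction

open WitnessExtraction

theorem lasVegas_witness_extraction_general :
    ∃ C : ℝ, 0 < C ∧
      ∀ n : ℕ, 1 ≤ n →
        ∃ σ : List Bool → RWEAction n,
          ∀ k : ℕ, 1 ≤ k →
            ∀ F : Finset (Finset (Fin n)), F.Nonempty →
              (∀ W ∈ F, W.card ≤ k) →
              ∀ μ : Measure (ℕ → Bool), IsProbabilityMeasure μ →
                FalseNegativeRateLE μ (1 / 4) →
                μ {ω | ∃ (m : ℕ) (W : Finset (Fin n)),
                    σ (RWErun σ F ω m).1 = RWEAction.halt W ∧ W ∈ F} = 1 ∧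
                ∫⁻ ω, haltingTime σ F ω ∂μ ≤ ENNReal.ofReal (C * k * Real.logb 2 (2 * n)) := by
  refine ⟨18, by norm_num, fun n hn => ⟨strategy n (Nat.clog 2 n), ?_⟩⟩
  intro k hk F hF hFk μ _ hμ
  have hΦ := isPotential_strategy (L := Nat.clog 2 n) hF hFk
  exact ⟨hΦ.measure_halt_mem_eq_one hμ, (hΦ.lintegral_haltingTime_le hμ).trans <|
    ENNReal.ofReal_le_ofReal (potential_start_clog_le F hn hk)⟩

/-- Theorem 2 / Lemma 3 (Las Vegas extraction). Let `0 ≤ p ≤ 1/4`. There are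
an absolute constant `C > 0` and, for each `n ≥ 1`, a deterministic adaptive
strategy `σ` with inclusion queries and membership tests such that for every
`k ≥ 1` and every nonempty family `F` of subsets of `{1,…,n}` with all
members of size at most `k`, the following holds for every probability
measure `μ` on infinite bit sequences under which the bits are independent
Bernoulli(`p`) (expressed by the product formula for cylinder events): when
the `j`-th inclusion query `Y` is answered YES exactly if some `W ∈ F` has
`W ⊆ Y` and the `j`-th bit is `0` (false), and membership tests are answered
truthfully, `σ` almost surely halts with output a member of `F`, and the
expected total number of actions is at most `C·k·log₂(2n)`. -/
theorem lasVegas_witness_extraction (p : ℝ) (hp0 : 0 ≤ p) (hp1 : p ≤ 1 / 4) :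
    ∃ C : ℝ, 0 < C ∧
      ∀ n : ℕ, 1 ≤ n →
        ∃ σ : List Bool → RWEAction n,
          ∀ k : ℕ, 1 ≤ k →
            ∀ F : Finset (Finset (Fin n)), F.Nonempty →
              (∀ W ∈ F, W.card ≤ k) →
              ∀ μ : Measure (ℕ → Bool), IsProbabilityMeasure μ →
                (∀ (s : Finset ℕ) (v : ℕ → Bool),
                  μ {ω | ∀ j ∈ s, ω j = v j} =
                    ∏ j ∈ s, ENNReal.ofReal (if v j then p else 1 - p)) →
                μ {ω | ∃ (m : ℕ) (W : Finset (Fin n)),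
                    σ (RWErun σ F ω m).1 = RWEAction.halt W ∧ W ∈ F} = 1 ∧
                ∫⁻ ω, (⨅ (m : ℕ) (_ : ∃ W : Finset (Fin n),
                    σ (RWErun σ F ω m).1 = RWEAction.halt W), (m : ENNReal)) ∂μ ≤
                  ENNReal.ofReal (C * k * Real.logb 2 (2 * n)) := by
  obtain ⟨C, hC, h⟩ := lasVegas_witness_extraction_general
  exact ⟨C, hC, fun n hn => (h n hn).imp fun _ hσ k hk F hF hFk μ hμ hbits =>
    hσ k hk F hF hFk μ hμ (falseNegativeRateLE_of_bernoulli hp0 hp1 hbits)⟩
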